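/- Let V be a countably infinite dimensional vector space over F_q. Then GL_fin(V) := {g ∈ GL(V) : ‖g‖ < ∞}, where ‖g‖ is the projective rank seminorm, is a normal subgroup of GL(V), and every element g ∈ GL_fin(V) acts as a fixed scalar λ ∈ F_qˣ on some subspace W ≤ V of finite codimension. -/

import Mathlib

/-! An automorphism has finite projective rank exactly when it is a unit scalar modulo the
two-sided ideal of endomorphisms of finite rank. Scalars are central in the quotient by this ideal,
so the unit scalars form a normal subgroup of its unit group, and `GL_fin` is the preimage of that
subgroup in `GL(V)`. The subspace of finite codimension is the eigenspace of the scalar. -/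

theorem normal_range_unitsMap_algebraMap (R A : Type*) [CommSemiring R] [Semiring A]
    [Algebra R A] : (Units.map (algebraMap R A : R →* A)).range.Normal where
  conj_mem := by
    rintro _ ⟨μ, rfl⟩ g
    have hcomm : Commute g (Units.map (algebraMap R A : R →* A) μ) :=
      Units.ext (Algebra.commutes (μ : R) (g : A)).symm
    exact ⟨μ, by rw [hcomm.eq, mul_inv_cancel_right]⟩

section ScalarUnits

variable (R : Type*) {A : Type*} [CommSemiring R] [Ring A] [Algebra R A] (I : TwoSidedIdeal A)

/-- The group of units of the `R`-algebra `A` that are congruent to a unit of `R` modulo the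
two-sided ideal `I`, encoded as a preimage under `Aˣ → (A / I)ˣ`. For the ideal of endomorphisms of
finite rank it is `GL_fin`. -/
def scalarUnitsModulo : Subgroup Aˣ :=
  (Units.map (algebraMap R I.ringCon.Quotient : R →* I.ringCon.Quotient)).range.comap
    (Units.map (I.ringCon.mk' : A →* I.ringCon.Quotient))

instance normal_scalarUnitsModulo : (scalarUnitsModulo R I).Normal :=
  (normal_range_unitsMap_algebraMap R I.ringCon.Quotient).comap _

variable {R I} in
theorem mem_scalarUnitsModulo_iff {g : Aˣ} :
    g ∈ scalarUnitsModulo R I ↔ ∃ μ : Rˣ, (g : A) - (μ : R) • (1 : A) ∈ I := by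
  refine exists_congr fun μ ↦ ?_
  calc Units.map (algebraMap R I.ringCon.Quotient : R →* I.ringCon.Quotient) μ =
        Units.map (I.ringCon.mk' : A →* I.ringCon.Quotient) g
      ↔ I.ringCon.mk' (algebraMap R A μ) = I.ringCon.mk' (g : A) := Units.ext_iff
    _ ↔ I.ringCon (g : A) (algebraMap R A μ) := eq_comm.trans I.ringCon.eq
    _ ↔ (g : A) - (μ : R) • (1 : A) ∈ I := by
        rw [I.rel_iff, Algebra.algebraMap_eq_smul_one]

end ScalarUnits

/-- The two-sided ideal of endomorphisms of `M` of finite rank. As in `LinearMap.finiteRange`, the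
range is required to be Noetherian, which over a Noetherian ring means finitely generated. -/
def finiteRangeIdeal (R M : Type*) [Ring R] [AddCommGroup M] [Module R M] :
    TwoSidedIdeal (Module.End R M) :=
  .mk' {f | f.HasNoetherianRange} .zero .add .neg
    (fun hf ↦ hf.comp_left _) (fun hf ↦ hf.comp_right _)

theorem mem_finiteRangeIdeal_iff {R M : Type*} [Ring R] [IsNoetherianRing R] [AddCommGroup M]
    [Module R M] {f : Module.End R M} :
    f ∈ finiteRangeIdeal R M ↔ Module.Finite R (LinearMap.range f) := by
  rw [finiteRangeIdeal, TwoSidedIdeal.mem_mk', Module.Finite.iff_fg]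
  exact LinearMap.hasNoetherianRange_iff_hasFiniteRange

theorem cofg_eigenspace_iff {R M : Type*} [CommRing R] [AddCommGroup M] [Module R M]
    {f : Module.End R M} {μ : R} :
    (f.eigenspace μ).CoFG ↔ Module.Finite R (LinearMap.range (f - μ • (1 : Module.End R M))) := by
  rw [Module.End.eigenspace_def, Module.Finite.iff_fg]
  exact LinearMap.ker_coFG_iff_hasFiniteRange

theorem GLfin_normal_subgroup_general {R M : Type*} [CommRing R] [IsNoetherianRing R]
    [AddCommGroup M] [Module R M] :
    ∃ N : Subgroup (Module.End R M)ˣ,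
      N.Normal ∧
      (∀ g : (Module.End R M)ˣ, g ∈ N ↔ ∃ μ : Rˣ,
        Module.Finite R
          ↥(LinearMap.range ((g : Module.End R M) - (μ : R) • (1 : Module.End R M)))) ∧
      ∀ g ∈ N, ∃ (μ : Rˣ) (W : Submodule R M), Module.Finite R (M ⧸ W) ∧
        ∀ v ∈ W, (g : Module.End R M) v = (μ : R) • v := by
  have mem_iff (g : (Module.End R M)ˣ) :
      g ∈ scalarUnitsModulo R (finiteRangeIdeal R M) ↔ ∃ μ : Rˣ, Module.Finite R
        ↥(LinearMap.range ((g : Module.End R M) - (μ : R) • (1 : Module.End R M))) := by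
    simp only [mem_scalarUnitsModulo_iff, mem_finiteRangeIdeal_iff]
  refine ⟨scalarUnitsModulo R (finiteRangeIdeal R M), inferInstance, mem_iff, fun g hg ↦ ?_⟩
  obtain ⟨μ, hμ⟩ := (mem_iff g).mp hg
  exact ⟨μ, Module.End.eigenspace (g : Module.End R M) μ, cofg_eigenspace_iff.mpr hμ,
    fun _ ↦ Module.End.mem_eigenspace_iff.mp⟩

/-- For a countably infinite dimensional vector space `V` over a finite field,
`GL_fin(V) = {g : ‖g‖ < ∞}` (finite projective rank) is a normal subgroup of `GL(V)`,
and each of its elements acts as a fixed scalar on a subspace of finite codimension. -/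
theorem GLfin_normal_subgroup {K V : Type*} [Field K] [Fintype K]
    [AddCommGroup V] [Module K V]
    (hdim : Module.rank K V = Cardinal.aleph0) :
    ∃ N : Subgroup (Module.End K V)ˣ,
      N.Normal ∧
      (∀ g : (Module.End K V)ˣ, g ∈ N ↔ ∃ μ : Kˣ,
        Module.Finite K
          ↥(LinearMap.range ((g : Module.End K V) - (μ : K) • (1 : Module.End K V)))) ∧
      ∀ g ∈ N, ∃ (μ : Kˣ) (W : Submodule K V), Module.Finite K (V ⧸ W) ∧
        ∀ v ∈ W, (g : Module.End K V) v = (μ : K) • v :=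
  GLfin_normal_subgroup_general
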